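/- Under the hypotheses of the preceding estimate (T' = {0 ≤ η ≤ ξ ≤ 1}; N ≥ max{1, |p₁|, |p₂|, |q₁|, |q₂|}; δ, δ_c power series in t on [0,1) with continuous coefficients bounded by N; G₀, G_{c,0}, G_{n+1}, G_{c,n+1} defined by the stated recursion), the series G := Σ_{n≥0} Gₙ and G_c := Σ_{n≥0} G_{c,n} converge absolutely and uniformly on T'×[0,t₀] for every t₀ ∈ (0,1), their sums satisfy the integral equations G(ξ,η,t) = G₀(ξ,η,t) + ∫_η^ξ∫₀^η [(δ+p₁∂/∂t)G + (δ_c+p₂∂/∂t)G_c](τ,s,t) ds dτ and G_c(ξ,η,t) = G_{c,0}(ξ,η,t) + ∫_η^ξ∫₀^η [(δ+q₁∂/∂t)G_c + (−δ_c+q₂∂/∂t)G](τ,s,t) ds dτ, and, setting M := N/(1−t₀), the functions k(x,y,t) := G((x+y)/2,(x−y)/2,t) and k_c(x,y,t) := G_c((x+y)/2,(x−y)/2,t) satisfy |k(x,y,t)| ≤ M e^{M(x²−y²)} and |k_c(x,y,t)| ≤ M e^{M(x²−y²)} for all 0 ≤ y ≤ x ≤ 1 and t ∈ (0,t₀). 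-/

import Mathlib

open Set intervalIntegral Filter

/-- The triangle `T' = {(ξ,η) : 0 ≤ η ≤ ξ ≤ 1}`. -/
def Tri : Set (ℝ × ℝ) := {p : ℝ × ℝ | 0 ≤ p.2 ∧ p.2 ≤ p.1 ∧ p.1 ≤ 1}

/-- Partial derivative in the last (time) variable. -/
noncomputable def pT (G : ℝ → ℝ → ℝ → ℝ) (ξ η t : ℝ) : ℝ := deriv (fun t' => G ξ η t') t

/-! Call `A (ξη)ᵐ / (1 - t)ⁿ⁺¹` a majorant of `F` when it dominates `F` coefficientwise in powers of
`t`. Multiplication by `δ` or `δc` and differentiation in `t` both raise the order of the pole at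
`t = 1` by one, differentiation at the cost of a factor `n + 1`, while integration over
`[η, ξ] × [0, η]` gains `ξη / (m + 1)²`. For `m = n` the two factors leave `1 / (n + 1)`, so the
`n`-th iterate has majorant `(4ξη)ⁿ Nⁿ⁺¹ / (n! (1 - t)ⁿ⁺¹)`. These majorants sum to
`M exp (4Mξη)` with `M = N / (1 - t)`, and `4ξη = x² - y²` for `ξ = (x + y) / 2`,
`η = (x - y) / 2`. -/

open Finset.HasAntidiagonal (antidiagonal mem_antidiagonal)

lemma sum_antidiagonal_choose_mul_choose (m n k : ℕ) :
    ∑ p ∈ antidiagonal k, (p.1 + m).choose m * (p.2 + n).choose n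
      = (k + (m + n + 1)).choose (m + n + 1) := by
  have h := congrArg (fun u : (PowerSeries ℤ)ˣ => PowerSeries.coeff k u.val)
    (PowerSeries.invOneSubPow_add ℤ (m + 1) (n + 1))
  simp only [add_add_add_comm m 1, ← add_assoc, Units.val_mul,
    PowerSeries.invOneSubPow_val_succ_eq_mk_add_choose, PowerSeries.coeff_mul,
    PowerSeries.coeff_mk] at h
  zify
  simpa only [add_comm, add_left_comm] using h.symm

lemma succ_mul_choose_add (n k : ℕ) :
    (k + 1) * (k + 1 + n).choose n = (n + 1) * (k + (n + 1)).choose (n + 1) := by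
  have h := Nat.choose_succ_right_eq (k + 1 + n) n
  rw [Nat.add_sub_cancel, mul_comm, mul_comm _ (k + 1), add_right_comm k 1 n] at h
  rw [add_right_comm k 1 n]
  exact h.symm

lemma hasSum_mul_choose_mul_geometric (n : ℕ) (C : ℝ) {r : ℝ} (hr : |r| < 1) :
    HasSum (fun k : ℕ => C * (k + n).choose n * r ^ k) (C / (1 - r) ^ (n + 1)) := by
  simpa only [mul_assoc, mul_one_div] using
    (hasSum_choose_mul_geometric_of_norm_lt_one n (r := r) hr).mul_left C

lemma norm_lt_one_of_mem_Ioo {t : ℝ} (ht : t ∈ Ioo (0 : ℝ) 1) : ‖t‖ < 1 :=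
  (Real.norm_of_nonneg ht.1.le).trans_lt ht.2

/-- The power series `∑ cₖ tᵏ` is dominated coefficientwise by the expansion
`∑ C (k+n choose n) tᵏ` of `C / (1 - t)ⁿ⁺¹`. -/
def BinomialBound {𝕜 : Type*} [Norm 𝕜] (n : ℕ) (C : ℝ) (c : ℕ → 𝕜) : Prop :=
  ∀ k, ‖c k‖ ≤ C * (k + n).choose n

namespace BinomialBound

section NormedField

variable {𝕜 : Type*} [NormedField 𝕜] {m n : ℕ} {B C : ℝ} {b c : ℕ → 𝕜} {t S T : 𝕜}

lemma nonneg (hc : BinomialBound n C c) : 0 ≤ C := by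
  simpa using (norm_nonneg _).trans (hc 0)

lemma mono (hc : BinomialBound n C c) (hCB : C ≤ B) : BinomialBound n B c := fun k =>
  (hc k).trans (by gcongr)

lemma add (hb : BinomialBound n B b) (hc : BinomialBound n C c) :
    BinomialBound n (B + C) (fun k => b k + c k) := fun k => by
  rw [add_mul]
  exact norm_add_le_of_le (hb k) (hc k)

lemma sum {ι : Type*} (s : Finset ι) {B : ι → ℝ} {b : ι → ℕ → 𝕜}
    (hb : ∀ j, BinomialBound n (B j) (b j)) :
    BinomialBound n (∑ j ∈ s, B j) (fun k => ∑ j ∈ s, b j k) := fun k => by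
  rw [Finset.sum_mul]
  exact norm_sum_le_of_le s fun j _ => hb j k

lemma const_mul (hc : BinomialBound n C c) {x : 𝕜} (hx : ‖x‖ ≤ B) :
    BinomialBound n (B * C) (fun k => x * c k) := fun k => by
  rw [mul_assoc]
  exact norm_mul_le_of_le hx (hc k)

lemma cauchyProduct (hb : BinomialBound m B b) (hc : BinomialBound n C c) :
    BinomialBound (m + n + 1) (B * C)
      (fun k => ∑ p ∈ antidiagonal k, b p.1 * c p.2) := fun k =>
  calc ‖∑ p ∈ antidiagonal k, b p.1 * c p.2‖
      ≤ ∑ p ∈ antidiagonal k,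
          B * (p.1 + m).choose m * (C * (p.2 + n).choose n) :=
        norm_sum_le_of_le _ fun p _ => norm_mul_le_of_le (hb p.1) (hc p.2)
    _ = B * C * (k + (m + n + 1)).choose (m + n + 1) := by
        simp only [← sum_antidiagonal_choose_mul_choose, mul_mul_mul_comm B, Nat.cast_sum,
          Nat.cast_mul, Finset.mul_sum]

lemma norm_mul_pow_le (hc : BinomialBound n C c) (t : 𝕜) (k : ℕ) :
    ‖c k * t ^ k‖ ≤ C * (k + n).choose n * ‖t‖ ^ k := by
  rw [norm_mul, norm_pow]
  gcongr
  exact hc k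

lemma summable_norm (hc : BinomialBound n C c) (ht : ‖t‖ < 1) :
    Summable fun k => ‖c k * t ^ k‖ :=
  .of_nonneg_of_le (fun _ => norm_nonneg _) (hc.norm_mul_pow_le t)
    (hasSum_mul_choose_mul_geometric n C (by rwa [abs_norm])).summable

lemma norm_le_of_hasSum (hc : BinomialBound n C c) (ht : ‖t‖ < 1)
    (hS : HasSum (fun k => c k * t ^ k) S) : ‖S‖ ≤ C / (1 - ‖t‖) ^ (n + 1) :=
  hS.tsum_eq ▸ tsum_of_norm_bounded
    (hasSum_mul_choose_mul_geometric n C (by rwa [abs_norm])) (hc.norm_mul_pow_le t)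

lemma hasSum_cauchyProduct [CompleteSpace 𝕜] (hb : BinomialBound m B b)
    (hc : BinomialBound n C c) (ht : ‖t‖ < 1) (hS : HasSum (fun k => b k * t ^ k) S)
    (hT : HasSum (fun k => c k * t ^ k) T) :
    HasSum (fun k => (∑ p ∈ antidiagonal k, b p.1 * c p.2) * t ^ k) (S * T) := by
  have hterm : ∀ k, (∑ p ∈ antidiagonal k, b p.1 * c p.2) * t ^ k
      = ∑ p ∈ antidiagonal k, b p.1 * t ^ p.1 * (c p.2 * t ^ p.2) := fun k => by
    rw [Finset.sum_mul]
    refine Finset.sum_congr rfl fun p hp => ?_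
    rw [← mem_antidiagonal.1 hp, pow_add, mul_mul_mul_comm]
  simp only [hterm]
  rw [← hS.tsum_eq, ← hT.tsum_eq, tsum_mul_tsum_eq_tsum_sum_antidiagonal_of_summable_norm
    (hb.summable_norm ht) (hc.summable_norm ht)]
  exact (summable_norm_sum_mul_antidiagonal_of_summable_norm
    (hb.summable_norm ht) (hc.summable_norm ht)).of_norm.hasSum

end NormedField

section RCLike

variable {𝕜 : Type*} [RCLike 𝕜] {n : ℕ} {C : ℝ} {c : ℕ → 𝕜} {t : 𝕜}

lemma derivCoeff (hc : BinomialBound n C c) :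
    BinomialBound (n + 1) ((n + 1) * C) (fun k => ((k : 𝕜) + 1) * c (k + 1)) := fun k => by
  have hchoose : ((k : ℝ) + 1) * (k + 1 + n).choose n
      = (n + 1) * (k + (n + 1)).choose (n + 1) := mod_cast succ_mul_choose_add n k
  calc ‖((k : 𝕜) + 1) * c (k + 1)‖
      ≤ (k + 1) * (C * (k + 1 + n).choose n) :=
        norm_mul_le_of_le (mod_cast (RCLike.norm_natCast (K := 𝕜) (k + 1)).le) (hc (k + 1))
    _ = (n + 1) * C * (k + (n + 1)).choose (n + 1) := by
        rw [mul_left_comm, hchoose]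
        ring

lemma hasDerivAt_tsum (hc : BinomialBound n C c) (ht : ‖t‖ < 1) :
    HasDerivAt (fun t => ∑' k, c k * t ^ k) (∑' k : ℕ, ((k : 𝕜) + 1) * c (k + 1) * t ^ k) t := by
  obtain ⟨r, htr, hr1⟩ := exists_between ht
  have hr0 : 0 < r := (norm_nonneg t).trans_lt htr
  have hsummable : ∀ s : 𝕜, ‖s‖ < 1 → Summable fun k : ℕ => ‖(k : 𝕜) * c k * s ^ (k - 1)‖ :=
    fun s hs => by
      rw [← summable_nat_add_iff 1]
      simpa using hc.derivCoeff.summable_norm hs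
  have hr : ‖(r : 𝕜)‖ = r := by rw [RCLike.norm_ofReal, abs_of_pos hr0]
  have key := hasDerivAt_tsum_of_isPreconnected (t := Metric.ball 0 r) (y₀ := 0) (y := t)
    (g := fun k t => c k * t ^ k) (g' := fun (k : ℕ) t => (k : 𝕜) * c k * t ^ (k - 1))
    (hsummable r (hr.trans_lt hr1)) Metric.isOpen_ball (convex_ball 0 r).isPreconnected
    (fun k y _ => by
      simpa only [mul_left_comm, mul_assoc] using (hasDerivAt_pow k y).const_mul (c k))
    (fun k y hy => by
      rw [norm_mul, norm_mul _ ((r : 𝕜) ^ (k - 1)), norm_pow, norm_pow, hr]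
      gcongr
      exact (mem_ball_zero_iff.1 hy).le)
    (Metric.mem_ball_self hr0) (hc.summable_norm (by simp)).of_norm (mem_ball_zero_iff.2 htr)
  rw [(hsummable t ht).of_norm.tsum_eq_zero_add] at key
  simpa using key

end RCLike

section Real

variable {n : ℕ} {C t : ℝ} {c : ℕ → ℝ} {f : ℝ → ℝ}

lemma hasDerivAt_of_hasSum (hc : BinomialBound n C c)
    (hf : ∀ t ∈ Ioo (0 : ℝ) 1, HasSum (fun k => c k * t ^ k) (f t)) (ht : t ∈ Ioo (0 : ℝ) 1) :
    HasDerivAt f (∑' k : ℕ, ((k : ℝ) + 1) * c (k + 1) * t ^ k) t := by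
  refine (hc.hasDerivAt_tsum (norm_lt_one_of_mem_Ioo ht)).congr_of_eventuallyEq ?_
  filter_upwards [isOpen_Ioo.mem_nhds ht] with r hr using (hf r hr).tsum_eq.symm

end Real

end BinomialBound

lemma deriv_eq_of_eventuallyEq_nhdsGT {V : Type*} [NormedAddCommGroup V] [NormedSpace ℝ V]
    {f g : ℝ → V} {a : ℝ} (hf : DifferentiableAt ℝ f a) (hg : DifferentiableAt ℝ g a)
    (hfg : f =ᶠ[nhdsWithin a (Ioi a)] g) : deriv f a = deriv g a := by
  have hvalue : f a = g a := tendsto_nhds_unique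
    (hf.continuousAt.tendsto.mono_left nhdsWithin_le_nhds)
    ((hg.continuousAt.tendsto.mono_left nhdsWithin_le_nhds).congr' hfg.symm)
  exact (uniqueDiffWithinAt_Ioi a).eq_deriv _ hf.hasDerivAt.hasDerivWithinAt
    (hg.hasDerivAt.hasDerivWithinAt.congr_of_eventuallyEq hfg hvalue)

/-- The two-sided derivative `deriv f 0` is either the right derivative `c 1` or the junk value
`0`. -/
lemma BinomialBound.norm_deriv_zero_le {n : ℕ} {C : ℝ} {c : ℕ → ℝ} {f : ℝ → ℝ}
    (hc : BinomialBound n C c)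
    (hf : ∀ t ∈ Ioo (0 : ℝ) 1, HasSum (fun k => c k * t ^ k) (f t)) :
    ‖deriv f 0‖ ≤ (n + 1) * C := by
  by_cases hd : DifferentiableAt ℝ f 0
  · have hP := hc.hasDerivAt_tsum (t := (0 : ℝ)) (by simp)
    have hev : f =ᶠ[nhdsWithin 0 (Ioi 0)] fun t => ∑' k, c k * t ^ k := by
      filter_upwards [Ioo_mem_nhdsGT zero_lt_one] with t ht using (hf t ht).tsum_eq.symm
    rw [deriv_eq_of_eventuallyEq_nhdsGT hd hP.differentiableAt hev, hP.deriv,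
      tsum_eq_single 0 fun k hk => by simp [hk]]
    simpa using hc.derivCoeff 0
  · rw [deriv_zero_of_not_differentiableAt hd, norm_zero]
    have := hc.nonneg
    positivity

section TriangleIntegrals

variable {V : Type*} [NormedAddCommGroup V] {ξ η τ s : ℝ}

lemma mul_nonneg_of_mem_tri (h : (ξ, η) ∈ Tri) : 0 ≤ ξ * η :=
  mul_nonneg (h.1.trans h.2.1) h.1

lemma mul_le_one_of_mem_tri (h : (ξ, η) ∈ Tri) : ξ * η ≤ 1 :=
  mul_le_one₀ h.2.2 h.1 (h.2.1.trans h.2.2)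

lemma mem_Tri_of_mem_rectangle (h : (ξ, η) ∈ Tri) (hτ : τ ∈ Icc η ξ) (hs : s ∈ Icc 0 η) :
    (τ, s) ∈ Tri :=
  ⟨hs.1, hs.2.trans hτ.1, hτ.2.trans h.2.2⟩

lemma mk_zero_mem_tri (hτ : τ ∈ Icc (0 : ℝ) 1) : (τ, (0 : ℝ)) ∈ Tri :=
  ⟨le_rfl, hτ.1, hτ.2⟩

lemma uIcc_subset_of_mem_tri (h : (ξ, η) ∈ Tri) : uIcc η ξ ⊆ Icc 0 1 := by
  rw [uIcc_of_le h.2.1]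
  exact Icc_subset_Icc h.1 h.2.2

lemma abs_sub_le_one_of_mem_tri (h : (ξ, η) ∈ Tri) : |ξ - η| ≤ 1 := by
  rw [abs_of_nonneg (sub_nonneg.2 h.2.1)]
  linarith [h.1, h.2.2]

/-- A continuous retraction of the plane onto `Tri`, used to extend functions continuous on `Tri`
to continuous functions on the plane. -/
noncomputable def triRetract (p : ℝ × ℝ) : ℝ × ℝ :=
  (max 0 (min p.1 1), max 0 (min p.2 (max 0 (min p.1 1))))

lemma continuous_triRetract : Continuous triRetract := by
  unfold triRetract
  fun_prop

lemma triRetract_mem (p : ℝ × ℝ) : triRetract p ∈ Tri :=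
  ⟨le_max_left _ _, max_le (le_max_left _ _) (min_le_right _ _),
    max_le zero_le_one (min_le_right _ _)⟩

lemma triRetract_eq_self {p : ℝ × ℝ} (hp : p ∈ Tri) : triRetract p = p := by
  obtain ⟨h0, h1, h2⟩ := hp
  simp only [triRetract, min_eq_left h2, max_eq_right (h0.trans h1), min_eq_left h1,
    max_eq_right h0]

variable [NormedSpace ℝ V]

lemma hasSum_intervalIntegral_of_continuousOn {a b : ℝ} {f : ℕ → ℝ → V} {F : ℝ → V} {u : ℕ → ℝ}
    (hf : ∀ n, ContinuousOn (f n) (uIcc a b)) (hu : Summable u)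
    (hfu : ∀ n, ∀ x ∈ uIcc a b, ‖f n x‖ ≤ u n)
    (hF : ∀ x ∈ uIcc a b, HasSum (fun n => f n x) (F x)) :
    HasSum (fun n => ∫ x in a..b, f n x) (∫ x in a..b, F x) :=
  hasSum_integral_of_dominated_convergence (fun n _ => u n)
    (fun n => ((hf n).mono uIoc_subset_uIcc).aestronglyMeasurable measurableSet_uIoc)
    (fun n => .of_forall fun x hx => hfu n x (uIoc_subset_uIcc hx))
    (.of_forall fun _ _ => hu) intervalIntegrable_const
    (.of_forall fun x hx => hF x (uIoc_subset_uIcc hx))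

lemma continuousOn_edgeIntegral {f : ℝ → V} (hf : ContinuousOn f (Icc 0 1)) :
    ContinuousOn (fun p : ℝ × ℝ => ∫ τ in p.2..p.1, f τ) Tri := by
  have hint : ∀ x ∈ Icc (0 : ℝ) 1, IntervalIntegrable f MeasureTheory.volume 0 x := fun x hx =>
    (hf.mono (Icc_subset_Icc_right hx.2)).intervalIntegrable_of_Icc hx.1
  have hprim : ContinuousOn (fun x => ∫ τ in (0 : ℝ)..x, f τ) (Icc 0 1) := by
    have h := continuousOn_primitive_interval' (hint 1 (right_mem_Icc.2 zero_le_one)) left_mem_uIcc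
    rwa [uIcc_of_le zero_le_one] at h
  have hfst : MapsTo Prod.fst Tri (Icc (0 : ℝ) 1) := fun p hp => ⟨hp.1.trans hp.2.1, hp.2.2⟩
  have hsnd : MapsTo Prod.snd Tri (Icc (0 : ℝ) 1) := fun p hp => ⟨hp.1, hp.2.1.trans hp.2.2⟩
  refine ((hprim.comp continuousOn_fst hfst).sub (hprim.comp continuousOn_snd hsnd)).congr
    fun p hp => ?_
  exact (integral_interval_sub_left (hint _ (hfst hp)) (hint _ (hsnd hp))).symm

lemma norm_edgeIntegral_le (h : (ξ, η) ∈ Tri) {f : ℝ → V} {B : ℝ}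
    (hf : ∀ τ ∈ Icc 0 1, ‖f τ‖ ≤ B) : ‖∫ τ in η..ξ, f τ‖ ≤ B :=
  have hB : 0 ≤ B := (norm_nonneg _).trans (hf 0 (left_mem_Icc.2 zero_le_one))
  calc ‖∫ τ in η..ξ, f τ‖ ≤ B * |ξ - η| := norm_integral_le_of_norm_le_const fun τ hτ =>
        hf τ (uIcc_subset_of_mem_tri h (uIoc_subset_uIcc hτ))
    _ ≤ B := mul_le_of_le_one_right hB (abs_sub_le_one_of_mem_tri h)

/-- The integral of `f` over the rectangle `[η, ξ] × [0, η]`, the domain of dependence of the point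
`(ξ, η)` in the Volterra equations on `Tri`. -/
noncomputable def rectIntegral (f : ℝ → ℝ → V) (ξ η : ℝ) : V :=
  ∫ τ in η..ξ, ∫ s in (0 : ℝ)..η, f τ s

lemma rectIntegral_congr (h : (ξ, η) ∈ Tri) {f g : ℝ → ℝ → V}
    (hfg : ∀ τ s, (τ, s) ∈ Tri → f τ s = g τ s) : rectIntegral f ξ η = rectIntegral g ξ η := by
  refine integral_congr fun τ hτ => integral_congr fun s hs => ?_
  rw [uIcc_of_le h.2.1] at hτ
  rw [uIcc_of_le h.1] at hs
  exact hfg _ _ (mem_Tri_of_mem_rectangle h hτ hs)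

lemma continuous_integral_triRetract {f : ℝ → ℝ → V}
    (hf : ContinuousOn (Function.uncurry f) Tri) :
    Continuous fun q : ℝ × ℝ =>
      ∫ s in (0 : ℝ)..q.2, Function.uncurry f (triRetract (q.1, s)) := by
  have hext : Continuous fun p => Function.uncurry f (triRetract p) :=
    hf.comp_continuous continuous_triRetract triRetract_mem
  exact continuous_parametric_intervalIntegral_of_continuous
    (f := fun (q : ℝ × ℝ) s => Function.uncurry f (triRetract (q.1, s)))
    (hext.comp (f := fun z : (ℝ × ℝ) × ℝ => (z.1.1, z.2)) (by fun_prop)) continuous_snd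

lemma continuousOn_innerIntegral (h : (ξ, η) ∈ Tri) {f : ℝ → ℝ → V}
    (hf : ContinuousOn (Function.uncurry f) Tri) :
    ContinuousOn (fun τ => ∫ s in (0 : ℝ)..η, f τ s) (Icc η ξ) := by
  refine ((continuous_integral_triRetract hf).comp (f := fun τ : ℝ => (τ, η))
    (by fun_prop)).continuousOn.congr fun τ hτ => integral_congr fun s hs => ?_
  rw [uIcc_of_le h.1] at hs
  simp only [triRetract_eq_self (mem_Tri_of_mem_rectangle h hτ hs), Function.uncurry_apply_pair]

lemma continuousOn_rectIntegral {f : ℝ → ℝ → V} (hf : ContinuousOn (Function.uncurry f) Tri) :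
    ContinuousOn (Function.uncurry (rectIntegral f)) Tri := by
  have hinner : Continuous fun q : (ℝ × ℝ) × ℝ =>
      ∫ s in (0 : ℝ)..q.1.2, Function.uncurry f (triRetract (q.2, s)) :=
    (continuous_integral_triRetract hf).comp (f := fun q : (ℝ × ℝ) × ℝ => (q.2, q.1.2))
      (by fun_prop)
  have hprim : ∀ {b : ℝ × ℝ → ℝ}, Continuous b → Continuous fun p : ℝ × ℝ =>
      ∫ τ in (0 : ℝ)..b p, ∫ s in (0 : ℝ)..p.2, Function.uncurry f (triRetract (τ, s)) :=
    continuous_parametric_intervalIntegral_of_continuous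
      (f := fun (p : ℝ × ℝ) τ => ∫ s in (0 : ℝ)..p.2, Function.uncurry f (triRetract (τ, s))) hinner
  have hint : ∀ (p : ℝ × ℝ) x, IntervalIntegrable
      (fun τ => ∫ s in (0 : ℝ)..p.2, Function.uncurry f (triRetract (τ, s)))
      MeasureTheory.volume 0 x := fun p x =>
    (hinner.comp (by fun_prop : Continuous fun τ : ℝ => (p, τ))).intervalIntegrable 0 x
  refine ((hprim continuous_fst).sub (hprim continuous_snd)).continuousOn.congr fun p hp => ?_
  rw [Pi.sub_apply, integral_interval_sub_left (hint p p.1) (hint p p.2)]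
  refine rectIntegral_congr hp fun τ s hτs => ?_
  rw [triRetract_eq_self hτs, Function.uncurry_apply_pair]

lemma hasSum_rectIntegral (h : (ξ, η) ∈ Tri) {f : ℕ → ℝ → ℝ → V} {F : ℝ → ℝ → V} {u : ℕ → ℝ}
    (hf : ∀ n, ContinuousOn (Function.uncurry (f n)) Tri) (hu : Summable u)
    (hfu : ∀ n τ s, (τ, s) ∈ Tri → ‖f n τ s‖ ≤ u n)
    (hF : ∀ τ s, (τ, s) ∈ Tri → HasSum (fun n => f n τ s) (F τ s)) :
    HasSum (fun n => rectIntegral (f n) ξ η) (rectIntegral F ξ η) := by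
  have hmem : ∀ τ ∈ uIcc η ξ, ∀ s ∈ uIcc 0 η, (τ, s) ∈ Tri := fun τ hτ s hs =>
    mem_Tri_of_mem_rectangle h (uIcc_of_le h.2.1 ▸ hτ) (uIcc_of_le h.1 ▸ hs)
  refine hasSum_intervalIntegral_of_continuousOn (u := fun n => u n * |η - 0|)
    (fun n => ?_) (hu.mul_right _) (fun n τ hτ => ?_) fun τ hτ => ?_
  · rw [uIcc_of_le h.2.1]
    exact continuousOn_innerIntegral h (hf n)
  · exact norm_integral_le_of_norm_le_const fun s hs =>
      hfu n τ s (hmem τ hτ s (uIoc_subset_uIcc hs))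
  · exact hasSum_intervalIntegral_of_continuousOn
      (fun n => (hf n).comp (by fun_prop : Continuous fun s : ℝ => (τ, s)).continuousOn (hmem τ hτ))
      hu (fun n s hs => hfu n τ s (hmem τ hτ s hs)) fun s hs => hF τ s (hmem τ hτ s hs)

lemma norm_rectIntegral_le (h : (ξ, η) ∈ Tri) {f : ℝ → ℝ → V} {A : ℝ} {m : ℕ} (hA : 0 ≤ A)
    (hf : ∀ τ s, (τ, s) ∈ Tri → ‖f τ s‖ ≤ A * (τ * s) ^ m) :
    ‖rectIntegral f ξ η‖ ≤ A / (m + 1) ^ 2 * (ξ * η) ^ (m + 1) := by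
  have hη : 0 ≤ η := h.1
  have hinner : ∀ τ ∈ Ioc η ξ, ‖∫ s in (0 : ℝ)..η, f τ s‖ ≤ A * η ^ (m + 1) / (m + 1) * τ ^ m :=
    fun τ hτ => by
      have hle : ∀ s ∈ Ioc 0 η, ‖f τ s‖ ≤ A * τ ^ m * s ^ m := fun s hs => by
        rw [mul_assoc, ← mul_pow]
        exact hf _ _ (mem_Tri_of_mem_rectangle h (Ioc_subset_Icc_self hτ) (Ioc_subset_Icc_self hs))
      calc ‖∫ s in (0 : ℝ)..η, f τ s‖ ≤ ∫ s in (0 : ℝ)..η, A * τ ^ m * s ^ m :=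
            norm_integral_le_of_norm_le hη (.of_forall hle)
              ((by fun_prop : Continuous _).intervalIntegrable _ _)
        _ = A * η ^ (m + 1) / (m + 1) * τ ^ m := by
            rw [integral_const_mul, integral_pow]
            ring
  calc ‖rectIntegral f ξ η‖ ≤ ∫ τ in η..ξ, A * η ^ (m + 1) / (m + 1) * τ ^ m :=
        norm_integral_le_of_norm_le h.2.1 (.of_forall hinner)
          ((by fun_prop : Continuous _).intervalIntegrable _ _)
    _ = A * η ^ (m + 1) / (m + 1) * ((ξ ^ (m + 1) - η ^ (m + 1)) / (m + 1)) := by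
        rw [integral_const_mul, integral_pow]
    _ ≤ A * η ^ (m + 1) / (m + 1) * (ξ ^ (m + 1) / (m + 1)) := by
        gcongr
        exact sub_le_self _ (by positivity)
    _ = A / (m + 1) ^ 2 * (ξ * η) ^ (m + 1) := by
        rw [mul_pow]
        field_simp

end TriangleIntegrals

lemma BinomialBound.norm_mul_pow_le_of_mem_tri {m n : ℕ} {A ξ η : ℝ} {c : ℕ → ℝ}
    (hc : BinomialBound n (A * (ξ * η) ^ m) c) (hA : 0 ≤ A) (h : (ξ, η) ∈ Tri) (t : ℝ) (k : ℕ) :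
    ‖c k * t ^ k‖ ≤ A * (k + n).choose n * ‖t‖ ^ k :=
  (hc.mono (mul_le_of_le_one_right hA
    (pow_le_one₀ (mul_nonneg_of_mem_tri h) (mul_le_one_of_mem_tri h)))).norm_mul_pow_le t k

lemma rectIntegral_mul_const {𝕜 : Type*} [RCLike 𝕜] (f : ℝ → ℝ → 𝕜) (c : 𝕜) (ξ η : ℝ) :
    rectIntegral (fun τ s => f τ s * c) ξ η = rectIntegral f ξ η * c := by
  simp only [rectIntegral, integral_mul_const]

/-- `F(ξ, η, t) = ∑ aₖ(ξ, η) tᵏ` for `0 < t < 1`, with coefficients continuous on `Tri` and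
dominated by those of `A (ξη)ᵐ / (1 - t)ⁿ⁺¹`. At `t = 0` only the resulting bound is kept, since
`pT F` is a two-sided derivative and hence possibly a junk value there. -/
structure HasMajorant (m n : ℕ) (A : ℝ) (F : ℝ → ℝ → ℝ → ℝ) : Prop where
  exists_coeff : ∃ a : ℕ → ℝ → ℝ → ℝ, (∀ k, ContinuousOn (Function.uncurry (a k)) Tri) ∧
    (∀ ξ η, (ξ, η) ∈ Tri → BinomialBound n (A * (ξ * η) ^ m) fun k => a k ξ η) ∧
    ∀ ξ η, (ξ, η) ∈ Tri → ∀ t ∈ Ioo (0 : ℝ) 1, HasSum (fun k => a k ξ η * t ^ k) (F ξ η t)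
  norm_zero_le : ∀ ξ η, (ξ, η) ∈ Tri → ‖F ξ η 0‖ ≤ A * (ξ * η) ^ m

namespace HasMajorant

variable {m n : ℕ} {A B : ℝ} {F : ℝ → ℝ → ℝ → ℝ} {ξ η t t₀ : ℝ}

lemma const_nonneg (hF : HasMajorant m n A F) : 0 ≤ A := by
  simpa using (norm_nonneg _).trans (hF.norm_zero_le 1 1 ⟨zero_le_one, le_rfl, le_rfl⟩)

lemma of_tsum {N : ℝ} {c : ℕ → ℝ → ℝ → ℝ} (hc : ∀ k, ContinuousOn (Function.uncurry (c k)) Tri)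
    (hcN : ∀ k ξ η, (ξ, η) ∈ Tri → ‖c k ξ η‖ ≤ N)
    (hF : ∀ ξ η, (ξ, η) ∈ Tri → ∀ t ∈ Ico (0 : ℝ) 1, F ξ η t = ∑' k, c k ξ η * t ^ k) :
    HasMajorant 0 0 N F := by
  have hbound : ∀ ξ η, (ξ, η) ∈ Tri → BinomialBound 0 (N * (ξ * η) ^ 0) fun k => c k ξ η :=
    fun ξ η h k => by simpa using hcN k ξ η h
  refine ⟨⟨c, hc, hbound, fun ξ η h t ht => ?_⟩, fun ξ η h => ?_⟩
  · rw [hF ξ η h t (Ioo_subset_Ico_self ht)]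
    exact ((hbound ξ η h).summable_norm (norm_lt_one_of_mem_Ioo ht)).of_norm.hasSum
  · rw [hF ξ η h 0 (left_mem_Ico.2 zero_lt_one), tsum_eq_single 0 fun k hk => by simp [hk]]
    simpa using hcN 0 ξ η h

lemma mono (hF : HasMajorant m n A F) (hAB : A ≤ B) : HasMajorant m n B F := by
  obtain ⟨⟨a, ha, hbound, hsum⟩, hzero⟩ := hF
  have hle : ∀ ξ η, (ξ, η) ∈ Tri → A * (ξ * η) ^ m ≤ B * (ξ * η) ^ m := fun ξ η h =>
    mul_le_mul_of_nonneg_right hAB (pow_nonneg (mul_nonneg_of_mem_tri h) m)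
  exact ⟨⟨a, ha, fun ξ η h => (hbound ξ η h).mono (hle ξ η h), hsum⟩,
    fun ξ η h => (hzero ξ η h).trans (hle ξ η h)⟩

lemma add {G : ℝ → ℝ → ℝ → ℝ} (hF : HasMajorant m n A F) (hG : HasMajorant m n B G) :
    HasMajorant m n (A + B) (fun ξ η t => F ξ η t + G ξ η t) := by
  obtain ⟨⟨a, ha, habound, hasum⟩, hazero⟩ := hF
  obtain ⟨⟨b, hb, hbbound, hbsum⟩, hbzero⟩ := hG
  refine ⟨⟨fun k ξ η => a k ξ η + b k ξ η, fun k => (ha k).add (hb k), fun ξ η h => ?_,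
    fun ξ η h t ht => ?_⟩, fun ξ η h => ?_⟩
  · rw [add_mul]
    exact (habound ξ η h).add (hbbound ξ η h)
  · simpa only [add_mul] using (hasum ξ η h t ht).add (hbsum ξ η h t ht)
  · rw [add_mul]
    exact norm_add_le_of_le (hazero ξ η h) (hbzero ξ η h)

lemma sum {ι : Type*} (s : Finset ι) {A : ι → ℝ} {F : ι → ℝ → ℝ → ℝ → ℝ}
    (hF : ∀ j, HasMajorant m n (A j) (F j)) :
    HasMajorant m n (∑ j ∈ s, A j) (fun ξ η t => ∑ j ∈ s, F j ξ η t) := by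
  choose a ha hbound hsum using fun j => (hF j).exists_coeff
  refine ⟨⟨fun k ξ η => ∑ j ∈ s, a j k ξ η, fun k => continuousOn_finsetSum s fun j _ => ha j k,
    fun ξ η h => ?_, fun ξ η h t ht => ?_⟩, fun ξ η h => ?_⟩
  · rw [Finset.sum_mul]
    exact BinomialBound.sum s fun j => hbound j ξ η h
  · simpa only [Finset.sum_mul] using hasSum_sum fun j _ => hsum j ξ η h t ht
  · rw [Finset.sum_mul]
    exact norm_sum_le_of_le s fun j _ => (hF j).norm_zero_le ξ η h

lemma const_mul (hF : HasMajorant m n A F) {x : ℝ} (hx : ‖x‖ ≤ B) :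
    HasMajorant m n (B * A) (fun ξ η t => x * F ξ η t) := by
  obtain ⟨⟨a, ha, hbound, hsum⟩, hzero⟩ := hF
  refine ⟨⟨fun k ξ η => x * a k ξ η, fun k => (ha k).const_mul x, fun ξ η h => ?_,
    fun ξ η h t ht => ?_⟩, fun ξ η h => ?_⟩
  · rw [mul_assoc]
    exact (hbound ξ η h).const_mul hx
  · simpa only [mul_assoc] using (hsum ξ η h t ht).mul_left x
  · rw [mul_assoc]
    exact norm_mul_le_of_le hx (hzero ξ η h)

lemma neg (hF : HasMajorant m n A F) : HasMajorant m n A (-F) := by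
  have h := hF.const_mul (x := -1) (B := 1) (by simp)
  simp only [one_mul, neg_one_mul] at h
  exact h

lemma mul {m₁ m₂ n₁ n₂ : ℕ} {G : ℝ → ℝ → ℝ → ℝ} (hF : HasMajorant m₁ n₁ A F)
    (hG : HasMajorant m₂ n₂ B G) :
    HasMajorant (m₁ + m₂) (n₁ + n₂ + 1) (A * B) (fun ξ η t => F ξ η t * G ξ η t) := by
  obtain ⟨⟨a, ha, habound, hasum⟩, hazero⟩ := hF
  obtain ⟨⟨b, hb, hbbound, hbsum⟩, hbzero⟩ := hG
  refine ⟨⟨fun k ξ η => ∑ p ∈ antidiagonal k, a p.1 ξ η * b p.2 ξ η,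
    fun k => continuousOn_finsetSum _ fun p _ => (ha p.1).mul (hb p.2), fun ξ η h => ?_,
    fun ξ η h t ht => ?_⟩, fun ξ η h => ?_⟩
  · rw [pow_add, mul_mul_mul_comm]
    exact (habound ξ η h).cauchyProduct (hbbound ξ η h)
  · have hprod := (habound ξ η h).hasSum_cauchyProduct (hbbound ξ η h) (norm_lt_one_of_mem_Ioo ht)
      (hasum ξ η h t ht) (hbsum ξ η h t ht)
    exact hprod
  · rw [pow_add, mul_mul_mul_comm]
    exact norm_mul_le_of_le (hazero ξ η h) (hbzero ξ η h)

lemma hasDerivAt_pT (hF : HasMajorant m n A F) (h : (ξ, η) ∈ Tri) (ht : t ∈ Ioo (0 : ℝ) 1) :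
    HasDerivAt (fun t => F ξ η t) (pT F ξ η t) t := by
  obtain ⟨a, -, hbound, hsum⟩ := hF.exists_coeff
  exact ((hbound ξ η h).hasDerivAt_of_hasSum (hsum ξ η h) ht).differentiableAt.hasDerivAt

protected lemma pT (hF : HasMajorant m n A F) : HasMajorant m (n + 1) ((n + 1) * A) (pT F) := by
  obtain ⟨a, ha, hbound, hsum⟩ := hF.exists_coeff
  refine ⟨⟨fun k ξ η => ((k : ℝ) + 1) * a (k + 1) ξ η, fun k => (ha (k + 1)).const_mul _,
    fun ξ η h => ?_, fun ξ η h t ht => ?_⟩, fun ξ η h => ?_⟩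
  · rw [mul_assoc]
    exact (hbound ξ η h).derivCoeff
  · rw [(hF.hasDerivAt_pT h ht).unique ((hbound ξ η h).hasDerivAt_of_hasSum (hsum ξ η h) ht)]
    exact ((hbound ξ η h).derivCoeff.summable_norm (norm_lt_one_of_mem_Ioo ht)).of_norm.hasSum
  · rw [mul_assoc]
    exact (hbound ξ η h).norm_deriv_zero_le (hsum ξ η h)

lemma norm_le (hF : HasMajorant m n A F) (ht₀ : t₀ < 1) (h : (ξ, η) ∈ Tri) (ht : t ∈ Icc 0 t₀) :
    ‖F ξ η t‖ ≤ A * (ξ * η) ^ m / (1 - t₀) ^ (n + 1) := by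
  have hr : 0 < 1 - t₀ := sub_pos.2 ht₀
  have hC : 0 ≤ A * (ξ * η) ^ m := (norm_nonneg _).trans (hF.norm_zero_le ξ η h)
  rcases ht.1.eq_or_lt with rfl | htpos
  · exact (hF.norm_zero_le ξ η h).trans (le_div_self hC (pow_pos hr _)
      (pow_le_one₀ hr.le (sub_le_self 1 ht.2)))
  · obtain ⟨a, -, hbound, hsum⟩ := hF.exists_coeff
    have ht1 : t < 1 := ht.2.trans_lt ht₀
    have htn : ‖t‖ = t := Real.norm_of_nonneg ht.1
    calc ‖F ξ η t‖ ≤ A * (ξ * η) ^ m / (1 - ‖t‖) ^ (n + 1) :=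
          (hbound ξ η h).norm_le_of_hasSum (by rwa [htn]) (hsum ξ η h t ⟨htpos, ht1⟩)
      _ ≤ A * (ξ * η) ^ m / (1 - t₀) ^ (n + 1) := by
          rw [htn]
          gcongr
          exact ht.2

lemma norm_le_const (hF : HasMajorant m n A F) (ht₀ : t₀ < 1) (h : (ξ, η) ∈ Tri)
    (ht : t ∈ Icc 0 t₀) : ‖F ξ η t‖ ≤ A / (1 - t₀) ^ (n + 1) :=
  (hF.norm_le ht₀ h ht).trans (div_le_div_of_nonneg_right
    (mul_le_of_le_one_right hF.const_nonneg
      (pow_le_one₀ (mul_nonneg_of_mem_tri h) (mul_le_one_of_mem_tri h)))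
    (pow_pos (sub_pos.2 ht₀) _).le)

lemma continuousOn (hF : HasMajorant m n A F) (ht : t ∈ Ioo (0 : ℝ) 1) :
    ContinuousOn (Function.uncurry fun ξ η => F ξ η t) Tri := by
  obtain ⟨a, ha, hbound, hsum⟩ := hF.exists_coeff
  have htn := norm_lt_one_of_mem_Ioo ht
  refine (continuousOn_tsum (fun k => (ha k).mul_const (t ^ k))
    (hasSum_mul_choose_mul_geometric n A (by rwa [abs_norm])).summable
    fun k p hp => (hbound _ _ hp).norm_mul_pow_le_of_mem_tri hF.const_nonneg hp t k).congr
    fun p hp => (hsum _ _ hp t ht).tsum_eq.symm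

protected lemma rectIntegral (hF : HasMajorant m n A F) :
    HasMajorant (m + 1) n (A / (m + 1) ^ 2)
      (fun ξ η t => rectIntegral (fun τ s => F τ s t) ξ η) := by
  obtain ⟨a, ha, hbound, hsum⟩ := hF.exists_coeff
  refine ⟨⟨fun k => _root_.rectIntegral (a k), fun k => continuousOn_rectIntegral (ha k),
    fun ξ η h k => ?_, fun ξ η h t ht => ?_⟩,
    fun ξ η h => norm_rectIntegral_le h hF.const_nonneg hF.norm_zero_le⟩
  · calc ‖_root_.rectIntegral (a k) ξ η‖
        ≤ A * (k + n).choose n / (m + 1) ^ 2 * (ξ * η) ^ (m + 1) :=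
          norm_rectIntegral_le h (mul_nonneg hF.const_nonneg (Nat.cast_nonneg _))
            fun τ s hτs => (hbound τ s hτs k).trans_eq (mul_right_comm _ _ _)
      _ = A / (m + 1) ^ 2 * (ξ * η) ^ (m + 1) * (k + n).choose n := by ring
  · have htn := norm_lt_one_of_mem_Ioo ht
    have hseries := hasSum_rectIntegral h (f := fun k τ s => a k τ s * t ^ k)
      (fun k => (ha k).mul_const (t ^ k))
      (hasSum_mul_choose_mul_geometric n A (by rwa [abs_norm])).summable
      (fun k τ s hτs => (hbound τ s hτs).norm_mul_pow_le_of_mem_tri hF.const_nonneg hτs t k)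
      fun τ s hτs => hsum τ s hτs t ht
    simpa only [rectIntegral_mul_const] using hseries

lemma edgeIntegral (hF : HasMajorant 0 n A F) :
    HasMajorant 0 n A (fun ξ η t => ∫ τ in η..ξ, F τ 0 t) := by
  obtain ⟨a, ha, hbound, hsum⟩ := hF.exists_coeff
  have hedge : ∀ k, ContinuousOn (fun τ => a k τ 0) (Icc 0 1) := fun k =>
    (ha k).comp (by fun_prop : Continuous fun τ : ℝ => (τ, (0 : ℝ))).continuousOn
      fun τ => mk_zero_mem_tri
  refine ⟨⟨fun k ξ η => ∫ τ in η..ξ, a k τ 0, fun k => continuousOn_edgeIntegral (hedge k),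
    fun ξ η h k => norm_edgeIntegral_le h fun τ hτ => ?_, fun ξ η h t ht => ?_⟩,
    fun ξ η h => norm_edgeIntegral_le h fun τ hτ => ?_⟩
  · simpa only [pow_zero] using hbound τ 0 (mk_zero_mem_tri hτ) k
  · have htn := norm_lt_one_of_mem_Ioo ht
    have hseries := hasSum_intervalIntegral_of_continuousOn
      (fun k => ((hedge k).mul_const (t ^ k)).mono (uIcc_subset_of_mem_tri h))
      (hasSum_mul_choose_mul_geometric n A (by rwa [abs_norm])).summable
      (fun k τ hτ => (hbound τ 0 (mk_zero_mem_tri (uIcc_subset_of_mem_tri h hτ))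
        ).norm_mul_pow_le_of_mem_tri hF.const_nonneg
        (mk_zero_mem_tri (uIcc_subset_of_mem_tri h hτ)) t k)
      fun τ hτ => hsum τ 0 (mk_zero_mem_tri (uIcc_subset_of_mem_tri h hτ)) t ht
    simpa only [integral_mul_const] using hseries
  · simpa only [pow_zero] using hF.norm_zero_le τ 0 (mk_zero_mem_tri hτ)

end HasMajorant

/-- The constant `Cₙ` for which the `n`-th successive approximation of a system of `d` Volterra
equations with data bounded by `N` is dominated by `Cₙ (ξη)ⁿ / (1 - t)ⁿ⁺¹`. -/
noncomputable def iterateConst (d N : ℝ) (n : ℕ) : ℝ :=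
  (2 * d) ^ n * N ^ (n + 1) / n.factorial

section IterateConst

variable {d N r : ℝ}

lemma iterateConst_nonneg (hd : 0 ≤ d) (hN : 0 ≤ N) (n : ℕ) : 0 ≤ iterateConst d N n := by
  unfold iterateConst
  positivity

lemma iterateConst_succ (d N : ℝ) (n : ℕ) :
    iterateConst d N (n + 1) = 2 * d * N * ((n + 1) * iterateConst d N n) / (n + 1) ^ 2 := by
  simp only [iterateConst, Nat.factorial_succ, Nat.cast_mul, Nat.cast_succ]
  field_simp
  ring

lemma iterateConst_mul_pow_div (d N r x : ℝ) (n : ℕ) :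
    iterateConst d N n * x ^ n / r ^ (n + 1)
      = N / r * ((N / r * (2 * d * x)) ^ n / n.factorial) := by
  simp only [iterateConst, div_eq_mul_inv, mul_pow, inv_pow, mul_inv, pow_succ]
  ring

lemma hasSum_iterateConst_mul_pow_div (d N r x : ℝ) :
    HasSum (fun n => iterateConst d N n * x ^ n / r ^ (n + 1))
      (N / r * Real.exp (N / r * (2 * d * x))) := by
  simp only [iterateConst_mul_pow_div, Real.exp_eq_exp_ℝ]
  exact (NormedSpace.expSeries_div_hasSum_exp (N / r * (2 * d * x))).mul_left (N / r)

lemma summable_iterateConst_div (d N r : ℝ) :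
    Summable fun n => iterateConst d N n / r ^ (n + 1) := by
  simpa only [one_pow, mul_one] using (hasSum_iterateConst_mul_pow_div d N r 1).summable

lemma summable_succ_mul_iterateConst_div (hd : 0 ≤ d) (hN : 0 ≤ N) (hr : 0 < r) :
    Summable fun n : ℕ => (n + 1) * iterateConst d N n / r ^ (n + 2) := by
  have hdominating : Summable fun n : ℕ => iterateConst d N n * 2 ^ n / r ^ (n + 1) / r :=
    (hasSum_iterateConst_mul_pow_div d N r 2).summable.div_const r
  refine hdominating.of_nonneg_of_le (fun n => ?_) fun n => ?_
  · have hC := iterateConst_nonneg hd hN n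
    positivity
  · have hC := iterateConst_nonneg hd hN n
    have hpow : (n : ℝ) + 1 ≤ 2 ^ n := mod_cast n.lt_two_pow_self
    calc (n + 1) * iterateConst d N n / r ^ (n + 2) ≤ 2 ^ n * iterateConst d N n / r ^ (n + 2) := by
          gcongr
      _ = iterateConst d N n * 2 ^ n / r ^ (n + 1) / r := by
          rw [pow_succ r (n + 1), div_div, mul_comm]

end IterateConst

section VolterraSystem

variable {ι : Type*} [Fintype ι]

/-- The `i`-th component of the integrand `∑ⱼ (Eᵢⱼ Hⱼ + pᵢⱼ ∂Hⱼ/∂t)` of the system of Volterra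
equations. -/
noncomputable def volterraIntegrand (E : ι → ι → ℝ → ℝ → ℝ → ℝ) (p : ι → ι → ℝ)
    (H : ι → ℝ → ℝ → ℝ → ℝ) (i : ι) (ξ η t : ℝ) : ℝ :=
  ∑ j, (E i j ξ η t * H j ξ η t + p i j * pT (H j) ξ η t)

/-- `H` is the sequence of successive approximations of the system of Volterra equations with
coefficients `E` and `p`, and the data are bounded by `N`. -/
structure IsVolterraIteration (N : ℝ) (E : ι → ι → ℝ → ℝ → ℝ → ℝ) (p : ι → ι → ℝ)
    (H : ℕ → ι → ℝ → ℝ → ℝ → ℝ) : Prop where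
  hasMajorant_coeff : ∀ i j, HasMajorant 0 0 N (E i j)
  norm_coeff_le : ∀ i j, ‖p i j‖ ≤ N
  hasMajorant_zero : ∀ i, HasMajorant 0 0 N (H 0 i)
  succ_eq : ∀ n i ξ η t, H (n + 1) i ξ η t
    = rectIntegral (fun τ s => volterraIntegrand E p (H n) i τ s t) ξ η

lemma HasMajorant.volterraIntegrand {m n : ℕ} {A N : ℝ} {E : ι → ι → ℝ → ℝ → ℝ → ℝ}
    {p : ι → ι → ℝ} {H : ι → ℝ → ℝ → ℝ → ℝ} (hE : ∀ i j, HasMajorant 0 0 N (E i j))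
    (hp : ∀ i j, ‖p i j‖ ≤ N) (hH : ∀ j, HasMajorant m n A (H j)) (i : ι) :
    HasMajorant m (n + 1) (2 * Fintype.card ι * N * ((n + 1) * A))
      (volterraIntegrand E p H i) := by
  have hterm : ∀ j, HasMajorant m (n + 1) (N * A + N * ((n + 1) * A))
      (fun ξ η t => E i j ξ η t * H j ξ η t + p i j * _root_.pT (H j) ξ η t) := fun j =>
    .add (by simpa only [zero_add] using (hE i j).mul (hH j)) ((hH j).pT.const_mul (hp i j))
  refine (HasMajorant.sum Finset.univ hterm).mono ?_
  have hNA : 0 ≤ N * A := mul_nonneg (hE i i).const_nonneg (hH i).const_nonneg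
  have hle : N * A + N * ((n + 1) * A) ≤ 2 * (N * ((n + 1) * A)) := by
    nlinarith [mul_nonneg n.cast_nonneg hNA]
  rw [Finset.sum_const, nsmul_eq_mul, Finset.card_univ]
  calc (Fintype.card ι : ℝ) * (N * A + N * ((n + 1) * A))
      ≤ Fintype.card ι * (2 * (N * ((n + 1) * A))) := by gcongr
    _ = 2 * Fintype.card ι * N * ((n + 1) * A) := by ring

namespace IsVolterraIteration

variable {N : ℝ} {E : ι → ι → ℝ → ℝ → ℝ → ℝ} {p : ι → ι → ℝ} {H : ℕ → ι → ℝ → ℝ → ℝ → ℝ}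
  {ξ η t t₀ : ℝ}

lemma hasMajorant (hH : IsVolterraIteration N E p H) (n : ℕ) (i : ι) :
    HasMajorant n n (iterateConst (Fintype.card ι) N n) (H n i) := by
  induction n generalizing i with
  | zero => simpa [iterateConst] using hH.hasMajorant_zero i
  | succ n ih =>
    have hrec : H (n + 1) i = fun ξ η t =>
        rectIntegral (fun τ s => volterraIntegrand E p (H n) i τ s t) ξ η :=
      funext₃ (hH.succ_eq n i)
    rw [hrec, iterateConst_succ]
    exact (HasMajorant.volterraIntegrand hH.hasMajorant_coeff hH.norm_coeff_le ih i).rectIntegral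

lemma norm_iterate_le (hH : IsVolterraIteration N E p H) (ht₀ : t₀ < 1) (h : (ξ, η) ∈ Tri)
    (ht : t ∈ Icc 0 t₀) (n : ℕ) (i : ι) :
    ‖H n i ξ η t‖ ≤ iterateConst (Fintype.card ι) N n / (1 - t₀) ^ (n + 1) :=
  (hH.hasMajorant n i).norm_le_const ht₀ h ht

lemma summable_norm (hH : IsVolterraIteration N E p H) (h : (ξ, η) ∈ Tri) (ht : t ∈ Ico 0 1)
    (i : ι) : Summable fun n => ‖H n i ξ η t‖ :=
  .of_nonneg_of_le (fun _ => norm_nonneg _)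
    (fun n => hH.norm_iterate_le ht.2 h (right_mem_Icc.2 ht.1) n i)
    (summable_iterateConst_div _ N _)

lemma tendstoUniformlyOn (hH : IsVolterraIteration N E p H) (ht₀ : t₀ < 1) (i : ι) :
    TendstoUniformlyOn
      (fun m : ℕ => fun q : (ℝ × ℝ) × ℝ => ∑ n ∈ Finset.range m, H n i q.1.1 q.1.2 q.2)
      (fun q => ∑' n, H n i q.1.1 q.1.2 q.2) atTop (Tri ×ˢ Icc 0 t₀) :=
  tendstoUniformlyOn_tsum_nat (summable_iterateConst_div _ N _)
    fun n _ hq => hH.norm_iterate_le ht₀ hq.1 hq.2 n i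

lemma norm_tsum_le (hH : IsVolterraIteration N E p H) (ht₀ : t₀ < 1) (h : (ξ, η) ∈ Tri)
    (ht : t ∈ Icc 0 t₀) (i : ι) :
    ‖∑' n, H n i ξ η t‖
      ≤ N / (1 - t₀) * Real.exp (N / (1 - t₀) * (2 * Fintype.card ι * (ξ * η))) :=
  tsum_of_norm_bounded (hasSum_iterateConst_mul_pow_div _ N _ _)
    fun n => (hH.hasMajorant n i).norm_le ht₀ h ht

lemma hasSum (hH : IsVolterraIteration N E p H) (h : (ξ, η) ∈ Tri) (ht : t ∈ Ico 0 1) (i : ι) :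
    HasSum (fun n => H n i ξ η t) (∑' n, H n i ξ η t) :=
  (hH.summable_norm h ht i).of_norm.hasSum

lemma hasSum_pT (hH : IsVolterraIteration N E p H) (h : (ξ, η) ∈ Tri) (ht : t ∈ Ioo (0 : ℝ) 1)
    (i : ι) :
    HasSum (fun n => pT (H n i) ξ η t) (pT (fun ξ η t => ∑' n, H n i ξ η t) ξ η t) := by
  obtain ⟨t₁, htt₁, ht₁⟩ := exists_between ht.2
  have hu := summable_succ_mul_iterateConst_div (Fintype.card ι).cast_nonneg
    (hH.hasMajorant_zero i).const_nonneg (sub_pos.2 ht₁)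
  have hbound : ∀ n, ∀ r ∈ Ioo 0 t₁, ‖pT (H n i) ξ η r‖
      ≤ (n + 1) * iterateConst (Fintype.card ι) N n / (1 - t₁) ^ (n + 2) := fun n r hr =>
    (hH.hasMajorant n i).pT.norm_le_const ht₁ h (Ioo_subset_Icc_self hr)
  have hderiv := hasDerivAt_tsum_of_isPreconnected (t := Ioo 0 t₁) (y₀ := t) (y := t)
    (g := fun n r => H n i ξ η r) (g' := fun n r => pT (H n i) ξ η r) hu isOpen_Ioo
    isPreconnected_Ioo
    (fun n r hr => (hH.hasMajorant n i).hasDerivAt_pT h ⟨hr.1, hr.2.trans ht₁⟩) hbound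
    ⟨ht.1, htt₁⟩ (hH.hasSum h (Ioo_subset_Ico_self ht) i).summable ⟨ht.1, htt₁⟩
  have hpT : pT (fun ξ η t => ∑' n, H n i ξ η t) ξ η t = ∑' n, pT (H n i) ξ η t := hderiv.deriv
  rw [hpT]
  exact (Summable.of_norm_bounded hu fun n => hbound n t ⟨ht.1, htt₁⟩).hasSum

lemma hasSum_volterraIntegrand (hH : IsVolterraIteration N E p H) (h : (ξ, η) ∈ Tri)
    (ht : t ∈ Ioo (0 : ℝ) 1) (i : ι) :
    HasSum (fun n => volterraIntegrand E p (H n) i ξ η t)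
      (volterraIntegrand E p (fun j ξ η t => ∑' n, H n j ξ η t) i ξ η t) :=
  hasSum_sum fun j _ => ((hH.hasSum h (Ioo_subset_Ico_self ht) j).mul_left _).add
    ((hH.hasSum_pT h ht j).mul_left _)

theorem tsum_eq (hH : IsVolterraIteration N E p H) (h : (ξ, η) ∈ Tri) (ht : t ∈ Ioo (0 : ℝ) 1)
    (i : ι) :
    ∑' n, H n i ξ η t = H 0 i ξ η t + rectIntegral
      (fun τ s => volterraIntegrand E p (fun j ξ η t => ∑' n, H n j ξ η t) i τ s t) ξ η := by
  have hmajorant := fun n =>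
    HasMajorant.volterraIntegrand hH.hasMajorant_coeff hH.norm_coeff_le (hH.hasMajorant n) i
  have hu := (summable_succ_mul_iterateConst_div (Fintype.card ι).cast_nonneg
    (hH.hasMajorant_zero i).const_nonneg (sub_pos.2 ht.2)).mul_left (2 * Fintype.card ι * N)
  have htail := hasSum_rectIntegral h (fun n => (hmajorant n).continuousOn ht) hu
    (fun n τ s hτs => ((hmajorant n).norm_le_const ht.2 hτs (right_mem_Icc.2 ht.1.le)).trans_eq
      (mul_div_assoc _ _ _))
    fun τ s hτs => hH.hasSum_volterraIntegrand hτs ht i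
  rw [(hH.hasSum h (Ioo_subset_Ico_self ht) i).summable.tsum_eq_zero_add, ← htail.tsum_eq]
  simp only [hH.succ_eq]

end IsVolterraIteration

end VolterraSystem

section CoupledKernels

lemma half_add_half_sub_mem_tri {x y : ℝ} (hy : 0 ≤ y) (hyx : y ≤ x) (hx : x ≤ 1) :
    ((x + y) / 2, (x - y) / 2) ∈ Tri := by
  refine ⟨?_, ?_, ?_⟩ <;> dsimp only <;> linarith

lemma IsVolterraIteration.norm_tsum_characteristic_le {N : ℝ}
    {E : Fin 2 → Fin 2 → ℝ → ℝ → ℝ → ℝ} {p : Fin 2 → Fin 2 → ℝ} {H : ℕ → Fin 2 → ℝ → ℝ → ℝ → ℝ}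
    (hH : IsVolterraIteration N E p H) {x y t t₀ : ℝ} (hy : 0 ≤ y) (hyx : y ≤ x) (hx : x ≤ 1)
    (ht₀ : t₀ < 1) (ht : t ∈ Icc 0 t₀) (i : Fin 2) :
    ‖∑' n, H n i ((x + y) / 2) ((x - y) / 2) t‖
      ≤ N / (1 - t₀) * Real.exp (N / (1 - t₀) * (x ^ 2 - y ^ 2)) := by
  have hxy : 2 * (Fintype.card (Fin 2) : ℝ) * ((x + y) / 2 * ((x - y) / 2)) = x ^ 2 - y ^ 2 := by
    rw [Fintype.card_fin]
    ring
  exact hxy ▸ hH.norm_tsum_le ht₀ (half_add_half_sub_mem_tri hy hyx hx) ht i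

variable {p₁ p₂ q₁ q₂ : ℝ} {δ δc : ℝ → ℝ → ℝ → ℝ}

lemma volterraIntegrand_coupled_zero (H : Fin 2 → ℝ → ℝ → ℝ → ℝ) (ξ η t : ℝ) :
    volterraIntegrand ![![δ, δc], ![-δc, δ]] ![![p₁, p₂], ![q₂, q₁]] H 0 ξ η t
      = (δ ξ η t * H 0 ξ η t + p₁ * pT (H 0) ξ η t)
        + (δc ξ η t * H 1 ξ η t + p₂ * pT (H 1) ξ η t) :=
  Fin.sum_univ_two _

lemma volterraIntegrand_coupled_one (H : Fin 2 → ℝ → ℝ → ℝ → ℝ) (ξ η t : ℝ) :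
    volterraIntegrand ![![δ, δc], ![-δc, δ]] ![![p₁, p₂], ![q₂, q₁]] H 1 ξ η t
      = (δ ξ η t * H 1 ξ η t + q₁ * pT (H 1) ξ η t)
        + (-δc ξ η t * H 0 ξ η t + q₂ * pT (H 0) ξ η t) :=
  (Fin.sum_univ_two _).trans (add_comm _ _)

lemma isVolterraIteration_coupled {N : ℝ} {G Gc : ℕ → ℝ → ℝ → ℝ → ℝ}
    (hp₁ : |p₁| ≤ N) (hp₂ : |p₂| ≤ N) (hq₁ : |q₁| ≤ N) (hq₂ : |q₂| ≤ N)
    (hδ : HasMajorant 0 0 N δ) (hδc : HasMajorant 0 0 N δc)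
    (hG0 : ∀ ξ η t, G 0 ξ η t = -(1 / 2) * ∫ τ in η..ξ, δ τ 0 t)
    (hGc0 : ∀ ξ η t, Gc 0 ξ η t = (1 / 2) * ∫ τ in η..ξ, δc τ 0 t)
    (hGrec : ∀ n ξ η t, G (n + 1) ξ η t = ∫ τ in η..ξ, ∫ s in (0 : ℝ)..η,
      ((δ τ s t * G n τ s t + p₁ * pT (G n) τ s t)
        + (δc τ s t * Gc n τ s t + p₂ * pT (Gc n) τ s t)))
    (hGcrec : ∀ n ξ η t, Gc (n + 1) ξ η t = ∫ τ in η..ξ, ∫ s in (0 : ℝ)..η,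
      ((δ τ s t * Gc n τ s t + q₁ * pT (Gc n) τ s t)
        + (-δc τ s t * G n τ s t + q₂ * pT (G n) τ s t))) :
    IsVolterraIteration N ![![δ, δc], ![-δc, δ]] ![![p₁, p₂], ![q₂, q₁]]
      (fun n => ![G n, Gc n]) where
  hasMajorant_coeff := by
    simp only [Fin.forall_fin_two, Matrix.cons_val_zero, Matrix.cons_val_one]
    exact ⟨⟨hδ, hδc⟩, hδc.neg, hδ⟩
  norm_coeff_le := by
    simp only [Fin.forall_fin_two, Matrix.cons_val_zero, Matrix.cons_val_one]
    exact ⟨⟨hp₁, hp₂⟩, hq₂, hq₁⟩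
  hasMajorant_zero := by
    have hhalf : ∀ {x : ℝ} {F K : ℝ → ℝ → ℝ → ℝ}, ‖x‖ ≤ 1 → HasMajorant 0 0 N F →
        (∀ ξ η t, K ξ η t = x * ∫ τ in η..ξ, F τ 0 t) → HasMajorant 0 0 N K := fun hx hF hK => by
      simpa only [one_mul, ← hK] using hF.edgeIntegral.const_mul hx
    simp only [Fin.forall_fin_two, Matrix.cons_val_zero, Matrix.cons_val_one]
    exact ⟨hhalf (by norm_num) hδ hG0, hhalf (by norm_num) hδc hGc0⟩
  succ_eq n := by
    simp only [Fin.forall_fin_two, volterraIntegrand_coupled_zero, volterraIntegrand_coupled_one]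
    exact ⟨hGrec n, hGcrec n⟩

end CoupledKernels

theorem successive_approximation_series_converges_and_kernel_bound_general
    (p₁ p₂ q₁ q₂ N : ℝ)
    (hNp₁ : |p₁| ≤ N) (hNp₂ : |p₂| ≤ N) (hNq₁ : |q₁| ≤ N) (hNq₂ : |q₂| ≤ N)
    (δ δc : ℝ → ℝ → ℝ → ℝ)
    (dcoef dccoef : ℕ → ℝ → ℝ → ℝ)
    (hdcont : ∀ n, ContinuousOn (fun p : ℝ × ℝ => dcoef n p.1 p.2) Tri)
    (hdccont : ∀ n, ContinuousOn (fun p : ℝ × ℝ => dccoef n p.1 p.2) Tri)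
    (hdbd : ∀ n, ∀ ξ η : ℝ, (ξ, η) ∈ Tri → |dcoef n ξ η| ≤ N)
    (hdcbd : ∀ n, ∀ ξ η : ℝ, (ξ, η) ∈ Tri → |dccoef n ξ η| ≤ N)
    (hδ : ∀ ξ η : ℝ, (ξ, η) ∈ Tri → ∀ t ∈ Ico (0:ℝ) 1,
      δ ξ η t = ∑' n, dcoef n ξ η * t ^ n)
    (hδc : ∀ ξ η : ℝ, (ξ, η) ∈ Tri → ∀ t ∈ Ico (0:ℝ) 1,
      δc ξ η t = ∑' n, dccoef n ξ η * t ^ n)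
    (G Gc : ℕ → ℝ → ℝ → ℝ → ℝ)
    (hG0 : ∀ ξ η t : ℝ, G 0 ξ η t = -(1 / 2) * ∫ τ in η..ξ, δ τ 0 t)
    (hGc0 : ∀ ξ η t : ℝ, Gc 0 ξ η t = (1 / 2) * ∫ τ in η..ξ, δc τ 0 t)
    (hGrec : ∀ n, ∀ ξ η t : ℝ,
      G (n + 1) ξ η t
        = ∫ τ in η..ξ, ∫ s in (0:ℝ)..η,
            ((δ τ s t * G n τ s t + p₁ * pT (G n) τ s t)
              + (δc τ s t * Gc n τ s t + p₂ * pT (Gc n) τ s t)))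
    (hGcrec : ∀ n, ∀ ξ η t : ℝ,
      Gc (n + 1) ξ η t
        = ∫ τ in η..ξ, ∫ s in (0:ℝ)..η,
            ((δ τ s t * Gc n τ s t + q₁ * pT (Gc n) τ s t)
              + (-δc τ s t * G n τ s t + q₂ * pT (G n) τ s t)))
    (t₀ : ℝ) (ht₀ : t₀ < 1)
    (Gsum Gcsum : ℝ → ℝ → ℝ → ℝ)
    (hGsum : ∀ ξ η t : ℝ, Gsum ξ η t = ∑' n, G n ξ η t)
    (hGcsum : ∀ ξ η t : ℝ, Gcsum ξ η t = ∑' n, Gc n ξ η t)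
    (M : ℝ) (hM : M = N / (1 - t₀)) :
    (∀ ξ η : ℝ, (ξ, η) ∈ Tri → ∀ t ∈ Icc (0:ℝ) t₀,
        Summable (fun n => |G n ξ η t|) ∧ Summable (fun n => |Gc n ξ η t|))
    ∧ TendstoUniformlyOn
        (fun m : ℕ => fun p : (ℝ × ℝ) × ℝ => ∑ n ∈ Finset.range m, G n p.1.1 p.1.2 p.2)
        (fun p : (ℝ × ℝ) × ℝ => Gsum p.1.1 p.1.2 p.2) atTop (Tri ×ˢ Icc (0:ℝ) t₀)
    ∧ TendstoUniformlyOn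
        (fun m : ℕ => fun p : (ℝ × ℝ) × ℝ => ∑ n ∈ Finset.range m, Gc n p.1.1 p.1.2 p.2)
        (fun p : (ℝ × ℝ) × ℝ => Gcsum p.1.1 p.1.2 p.2) atTop (Tri ×ˢ Icc (0:ℝ) t₀)
    ∧ (∀ ξ η : ℝ, (ξ, η) ∈ Tri → ∀ t ∈ Ioo (0:ℝ) t₀,
        Gsum ξ η t
          = G 0 ξ η t
            + ∫ τ in η..ξ, ∫ s in (0:ℝ)..η,
                ((δ τ s t * Gsum τ s t + p₁ * pT Gsum τ s t)
                  + (δc τ s t * Gcsum τ s t + p₂ * pT Gcsum τ s t))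
        ∧ Gcsum ξ η t
          = Gc 0 ξ η t
            + ∫ τ in η..ξ, ∫ s in (0:ℝ)..η,
                ((δ τ s t * Gcsum τ s t + q₁ * pT Gcsum τ s t)
                  + (-δc τ s t * Gsum τ s t + q₂ * pT Gsum τ s t)))
    ∧ (∀ x y : ℝ, 0 ≤ y → y ≤ x → x ≤ 1 → ∀ t ∈ Ioo (0:ℝ) t₀,
        |Gsum ((x + y) / 2) ((x - y) / 2) t| ≤ M * Real.exp (M * (x ^ 2 - y ^ 2))
        ∧ |Gcsum ((x + y) / 2) ((x - y) / 2) t| ≤ M * Real.exp (M * (x ^ 2 - y ^ 2))) := by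
  have hδ' : HasMajorant 0 0 N δ := .of_tsum hdcont hdbd hδ
  have hδc' : HasMajorant 0 0 N δc := .of_tsum hdccont hdcbd hδc
  have hH := isVolterraIteration_coupled hNp₁ hNp₂ hNq₁ hNq₂ hδ' hδc' hG0 hGc0 hGrec hGcrec
  obtain rfl : Gsum = fun ξ η t => ∑' n, G n ξ η t := funext₃ hGsum
  obtain rfl : Gcsum = fun ξ η t => ∑' n, Gc n ξ η t := funext₃ hGcsum
  subst hM
  refine ⟨fun ξ η h t ht => ?_, hH.tendstoUniformlyOn ht₀ 0, hH.tendstoUniformlyOn ht₀ 1,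
    fun ξ η h t ht => ?_, fun x y hy hyx hx t ht => ?_⟩
  · have ht' : t ∈ Ico 0 1 := ⟨ht.1, ht.2.trans_lt ht₀⟩
    exact ⟨hH.summable_norm h ht' 0, hH.summable_norm h ht' 1⟩
  · have heq := hH.tsum_eq h ⟨ht.1, ht.2.trans ht₀⟩
    simp only [Fin.forall_fin_two, volterraIntegrand_coupled_zero, volterraIntegrand_coupled_one]
      at heq
    exact heq
  · have hkernel := hH.norm_tsum_characteristic_le hy hyx hx ht₀ (Ioo_subset_Icc_self ht)
    exact ⟨hkernel 0, hkernel 1⟩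

/-- the successive-approximation series `ΣGₙ`, `ΣG_{c,n}` converge
absolutely and uniformly on `T' × [0,t₀]` for every `t₀ ∈ (0,1)`, their sums solve the
Volterra-type integral equations, and the corresponding kernels
`k(x,y,t) = G((x+y)/2,(x−y)/2,t)`, `k_c(x,y,t) = G_c((x+y)/2,(x−y)/2,t)` satisfy the
exponential bound `M e^{M(x²−y²)}` with `M = N/(1−t₀)`. -/
theorem successive_approximation_series_converges_and_kernel_bound
    (p₁ p₂ q₁ q₂ N : ℝ)
    (hN1 : 1 ≤ N) (hNp₁ : |p₁| ≤ N) (hNp₂ : |p₂| ≤ N) (hNq₁ : |q₁| ≤ N) (hNq₂ : |q₂| ≤ N)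
    (δ δc : ℝ → ℝ → ℝ → ℝ)
    (dcoef dccoef : ℕ → ℝ → ℝ → ℝ)
    (hdcont : ∀ n, ContinuousOn (fun p : ℝ × ℝ => dcoef n p.1 p.2) Tri)
    (hdccont : ∀ n, ContinuousOn (fun p : ℝ × ℝ => dccoef n p.1 p.2) Tri)
    (hdbd : ∀ n, ∀ ξ η : ℝ, (ξ, η) ∈ Tri → |dcoef n ξ η| ≤ N)
    (hdcbd : ∀ n, ∀ ξ η : ℝ, (ξ, η) ∈ Tri → |dccoef n ξ η| ≤ N)
    (hδ : ∀ ξ η : ℝ, (ξ, η) ∈ Tri → ∀ t ∈ Ico (0:ℝ) 1,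
      δ ξ η t = ∑' n, dcoef n ξ η * t ^ n)
    (hδc : ∀ ξ η : ℝ, (ξ, η) ∈ Tri → ∀ t ∈ Ico (0:ℝ) 1,
      δc ξ η t = ∑' n, dccoef n ξ η * t ^ n)
    (G Gc : ℕ → ℝ → ℝ → ℝ → ℝ)
    (hG0 : ∀ ξ η t : ℝ, G 0 ξ η t = -(1 / 2) * ∫ τ in η..ξ, δ τ 0 t)
    (hGc0 : ∀ ξ η t : ℝ, Gc 0 ξ η t = (1 / 2) * ∫ τ in η..ξ, δc τ 0 t)
    (hGrec : ∀ n, ∀ ξ η t : ℝ,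
      G (n + 1) ξ η t
        = ∫ τ in η..ξ, ∫ s in (0:ℝ)..η,
            ((δ τ s t * G n τ s t + p₁ * pT (G n) τ s t)
              + (δc τ s t * Gc n τ s t + p₂ * pT (Gc n) τ s t)))
    (hGcrec : ∀ n, ∀ ξ η t : ℝ,
      Gc (n + 1) ξ η t
        = ∫ τ in η..ξ, ∫ s in (0:ℝ)..η,
            ((δ τ s t * Gc n τ s t + q₁ * pT (Gc n) τ s t)
              + (-δc τ s t * G n τ s t + q₂ * pT (G n) τ s t)))
    (t₀ : ℝ) (ht₀ : t₀ ∈ Ioo (0:ℝ) 1)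
    (Gsum Gcsum : ℝ → ℝ → ℝ → ℝ)
    (hGsum : ∀ ξ η t : ℝ, Gsum ξ η t = ∑' n, G n ξ η t)
    (hGcsum : ∀ ξ η t : ℝ, Gcsum ξ η t = ∑' n, Gc n ξ η t)
    (M : ℝ) (hM : M = N / (1 - t₀)) :
    -- absolute convergence on T' × [0,t₀]
    (∀ ξ η : ℝ, (ξ, η) ∈ Tri → ∀ t ∈ Icc (0:ℝ) t₀,
        Summable (fun n => |G n ξ η t|) ∧ Summable (fun n => |Gc n ξ η t|))
    -- uniform convergence on T' × [0,t₀]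
    ∧ TendstoUniformlyOn
        (fun m : ℕ => fun p : (ℝ × ℝ) × ℝ => ∑ n ∈ Finset.range m, G n p.1.1 p.1.2 p.2)
        (fun p : (ℝ × ℝ) × ℝ => Gsum p.1.1 p.1.2 p.2) atTop (Tri ×ˢ Icc (0:ℝ) t₀)
    ∧ TendstoUniformlyOn
        (fun m : ℕ => fun p : (ℝ × ℝ) × ℝ => ∑ n ∈ Finset.range m, Gc n p.1.1 p.1.2 p.2)
        (fun p : (ℝ × ℝ) × ℝ => Gcsum p.1.1 p.1.2 p.2) atTop (Tri ×ˢ Icc (0:ℝ) t₀)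
    -- the sums satisfy the integral equations
    ∧ (∀ ξ η : ℝ, (ξ, η) ∈ Tri → ∀ t ∈ Ioo (0:ℝ) t₀,
        Gsum ξ η t
          = G 0 ξ η t
            + ∫ τ in η..ξ, ∫ s in (0:ℝ)..η,
                ((δ τ s t * Gsum τ s t + p₁ * pT Gsum τ s t)
                  + (δc τ s t * Gcsum τ s t + p₂ * pT Gcsum τ s t))
        ∧ Gcsum ξ η t
          = Gc 0 ξ η t
            + ∫ τ in η..ξ, ∫ s in (0:ℝ)..η,
                ((δ τ s t * Gcsum τ s t + q₁ * pT Gcsum τ s t)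
                  + (-δc τ s t * Gsum τ s t + q₂ * pT Gsum τ s t)))
    -- exponential bound on the kernels in the original variables
    ∧ (∀ x y : ℝ, 0 ≤ y → y ≤ x → x ≤ 1 → ∀ t ∈ Ioo (0:ℝ) t₀,
        |Gsum ((x + y) / 2) ((x - y) / 2) t| ≤ M * Real.exp (M * (x ^ 2 - y ^ 2))
        ∧ |Gcsum ((x + y) / 2) ((x - y) / 2) t| ≤ M * Real.exp (M * (x ^ 2 - y ^ 2))) := by
  exact successive_approximation_series_converges_and_kernel_bound_general p₁ p₂ q₁ q₂ N hNp₁ hNp₂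
    hNq₁ hNq₂ δ δc dcoef dccoef hdcont hdccont hdbd hdcbd hδ hδc G Gc hG0 hGc0 hGrec hGcrec
    t₀ ht₀.2 Gsum Gcsum hGsum hGcsum M hM
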